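/- Let c > 0 and let v : [0,∞) → (0,1) be nondecreasing. Assume that for almost every r > 0, v is differentiable at r with v'(r) ≥ c·I(v(r)). Then for all 0 ≤ ρ ≤ r, Φ⁻¹(v(r)) ≥ Φ⁻¹(v(ρ)) + c·(r-ρ); equivalently, v(r) ≥ Φ(Φ⁻¹(v(ρ)) + c·(r-ρ)). -/

import Mathlib

open Real MeasureTheory

/-- The standard Gaussian density. -/
noncomputable def gaussPdf (z : ℝ) : ℝ := (Real.sqrt (2 * Real.pi))⁻¹ * Real.exp (-z ^ 2 / 2)

/-- The standard normal CDF. -/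
noncomputable def Phi (r : ℝ) : ℝ := ∫ z in Set.Iic r, gaussPdf z

/-- The inverse of the standard normal CDF. -/
noncomputable def PhiInv : ℝ → ℝ := Function.invFun Phi

/-- The Gaussian isoperimetric profile `I = φ ∘ Φ⁻¹`. -/
noncomputable def gaussI (a : ℝ) : ℝ := gaussPdf (PhiInv a)

open Set Filter Topology ProbabilityTheory

/-!
Since `(Φ⁻¹)' = 1 / I`, the chain rule turns `v' ≥ c * I(v)` into `(Φ⁻¹ ∘ v)' ≥ c` almost
everywhere. The function `v` may be discontinuous or singular, so the fundamental theorem of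
calculus may fail for `Φ⁻¹ ∘ v`; but this is monotone, and by Lebesgue's theorem the increment
of a monotone function is at least the integral of its derivative, which is the direction needed.
-/

section Monotone

variable {a b : ℝ} {v g : ℝ → ℝ}

lemma ae_differentiableAt_of_monotoneOn_Icc (hv : MonotoneOn v (Icc a b)) :
    ∀ᵐ x ∂volume.restrict (Icc a b), DifferentiableAt ℝ v x := by
  rw [← restrict_Ioo_eq_restrict_Icc]
  filter_upwards [(hv.mono Ioo_subset_Icc_self).ae_differentiableWithinAt measurableSet_Ioo,
    ae_restrict_mem measurableSet_Ioo] with x hdiff hx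
  exact hdiff.differentiableAt (Ioo_mem_nhds hx.1 hx.2)

lemma integral_le_sub_of_monotoneOn_of_ae_le_deriv (hab : a ≤ b) (hv : MonotoneOn v (Icc a b))
    (hg : IntervalIntegrable g volume a b)
    (hle : ∀ᵐ x ∂volume.restrict (Icc a b), g x ≤ deriv v x) :
    ∫ x in a..b, g x ≤ v b - v a := by
  rw [← uIcc_of_le hab] at hv
  have hincr : 0 ≤ v b - v a := sub_nonneg.2 (hv left_mem_uIcc right_mem_uIcc hab)
  have hderiv := hv.intervalIntegral_deriv_mem_uIcc
  rw [uIcc_of_le hincr] at hderiv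
  exact (intervalIntegral.integral_mono_ae_restrict hab hg hv.intervalIntegrable_deriv hle).trans
    hderiv.2

lemma integral_le_comp_sub_comp_of_monotoneOn {F F' : ℝ → ℝ} (hab : a ≤ b)
    (hv : MonotoneOn v (Icc a b)) (hF : ∀ y ∈ Icc (v a) (v b), HasDerivAt F (F' y) y)
    (hF' : ∀ y ∈ Icc (v a) (v b), 0 ≤ F' y) (hg : IntervalIntegrable g volume a b)
    (hle : ∀ᵐ x ∂volume.restrict (Icc a b), g x ≤ F' (v x) * deriv v x) :
    ∫ x in a..b, g x ≤ F (v b) - F (v a) := by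
  have hmaps : MapsTo v (Icc a b) (Icc (v a) (v b)) := hv.mapsTo_Icc
  have hFmono : MonotoneOn F (Icc (v a) (v b)) :=
    monotoneOn_of_hasDerivWithinAt_nonneg (convex_Icc _ _)
      (fun y hy => (hF y hy).continuousAt.continuousWithinAt)
      (fun y hy => (hF y (interior_subset hy)).hasDerivWithinAt)
      (fun y hy => hF' y (interior_subset hy))
  refine integral_le_sub_of_monotoneOn_of_ae_le_deriv (v := F ∘ v) hab
    (hFmono.comp hv hmaps) hg ?_
  filter_upwards [hle, ae_differentiableAt_of_monotoneOn_Icc hv,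
    ae_restrict_mem measurableSet_Icc] with x hx hdiff hxmem
  rwa [((hF _ (hmaps hxmem)).comp x hdiff.hasDerivAt).deriv]

end Monotone

section Gaussian

lemma gaussPdf_eq_gaussianPDFReal : gaussPdf = gaussianPDFReal 0 1 := by
  funext z
  simp [gaussPdf, gaussianPDFReal]

lemma gaussPdf_pos (z : ℝ) : 0 < gaussPdf z := by
  rw [gaussPdf_eq_gaussianPDFReal]
  exact gaussianPDFReal_pos _ _ _ one_ne_zero

lemma continuous_gaussPdf : Continuous gaussPdf := by
  unfold gaussPdf
  fun_prop

lemma integrable_gaussPdf : Integrable gaussPdf := by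
  rw [gaussPdf_eq_gaussianPDFReal]
  exact integrable_gaussianPDFReal _ _

lemma Phi_eq_cdf : Phi = cdf (gaussianReal 0 1) := by
  funext x
  rw [cdf_eq_real, measureReal_def, gaussianReal_apply_eq_integral _ one_ne_zero,
    ENNReal.toReal_ofReal (integral_nonneg (gaussianPDFReal_nonneg _ _)), Phi,
    gaussPdf_eq_gaussianPDFReal]

lemma hasDerivAt_Phi (x : ℝ) : HasDerivAt Phi (gaussPdf x) x := by
  have hPhi : Phi = fun u => Phi 0 + ∫ z in (0 : ℝ)..u, gaussPdf z := by
    funext u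
    rw [← intervalIntegral.integral_Iic_sub_Iic integrable_gaussPdf.integrableOn
      integrable_gaussPdf.integrableOn]
    simp [Phi]
  rw [hPhi]
  exact (continuous_gaussPdf.integral_hasStrictDerivAt 0 x).hasDerivAt.const_add _

lemma strictMono_Phi : StrictMono Phi :=
  strictMono_of_hasDerivAt_pos hasDerivAt_Phi gaussPdf_pos

lemma continuous_Phi : Continuous Phi :=
  continuous_iff_continuousAt.2 fun x => (hasDerivAt_Phi x).continuousAt

lemma Phi_mem_Ioo (x : ℝ) : Phi x ∈ Ioo (0 : ℝ) 1 := by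
  constructor
  · calc
      0 ≤ Phi (x - 1) := by rw [Phi_eq_cdf]; exact cdf_nonneg _ _
      _ < Phi x := strictMono_Phi (sub_one_lt x)
  · calc
      Phi x < Phi (x + 1) := strictMono_Phi (lt_add_one x)
      _ ≤ 1 := by rw [Phi_eq_cdf]; exact cdf_le_one _ _

lemma Ioo_subset_range_Phi : Ioo (0 : ℝ) 1 ⊆ range Phi := by
  intro a ha
  have hbot : Tendsto Phi atBot (𝓝 0) := Phi_eq_cdf ▸ tendsto_cdf_atBot _
  have htop : Tendsto Phi atTop (𝓝 1) := Phi_eq_cdf ▸ tendsto_cdf_atTop _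
  exact mem_range_of_exists_le_of_exists_ge continuous_Phi
    (hbot.eventually_le_const ha.1).exists (htop.eventually_const_le ha.2).exists

lemma PhiInv_Phi (x : ℝ) : PhiInv (Phi x) = x :=
  Function.leftInverse_invFun strictMono_Phi.injective x

lemma Phi_PhiInv {a : ℝ} (ha : a ∈ Ioo (0 : ℝ) 1) : Phi (PhiInv a) = a :=
  Function.invFun_eq (Ioo_subset_range_Phi ha)

lemma le_PhiInv_iff {a x : ℝ} (ha : a ∈ Ioo (0 : ℝ) 1) : x ≤ PhiInv a ↔ Phi x ≤ a := by
  rw [← strictMono_Phi.le_iff_le, Phi_PhiInv ha]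

lemma strictMonoOn_PhiInv : StrictMonoOn PhiInv (Ioo (0 : ℝ) 1) := by
  intro a ha b hb hab
  rwa [← strictMono_Phi.lt_iff_lt, Phi_PhiInv ha, Phi_PhiInv hb]

lemma image_PhiInv_Ioo : PhiInv '' Ioo (0 : ℝ) 1 = univ :=
  eq_univ_of_forall fun x => ⟨Phi x, Phi_mem_Ioo x, PhiInv_Phi x⟩

lemma continuousAt_PhiInv {a : ℝ} (ha : a ∈ Ioo (0 : ℝ) 1) : ContinuousAt PhiInv a :=
  strictMonoOn_PhiInv.continuousAt_of_image_mem_nhds (Ioo_mem_nhds ha.1 ha.2)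
    (image_PhiInv_Ioo ▸ univ_mem)

lemma gaussI_pos (a : ℝ) : 0 < gaussI a :=
  gaussPdf_pos _

lemma hasDerivAt_PhiInv {a : ℝ} (ha : a ∈ Ioo (0 : ℝ) 1) :
    HasDerivAt PhiInv (gaussI a)⁻¹ a := by
  refine (hasDerivAt_Phi (PhiInv a)).of_local_left_inverse (continuousAt_PhiInv ha)
    (gaussI_pos a).ne' ?_
  filter_upwards [Ioo_mem_nhds ha.1 ha.2] with y hy using Phi_PhiInv hy

end Gaussian

theorem stmt10_general {s : Set ℝ} [s.OrdConnected] {c v : ℝ → ℝ} (hc : LocallyIntegrableOn c s)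
    (hv01 : MapsTo v s (Ioo 0 1)) (hmono : MonotoneOn v s)
    (hderiv : ∀ᵐ x ∂volume.restrict s, c x * gaussI (v x) ≤ deriv v x)
    {ρ r : ℝ} (hρ : ρ ∈ s) (hr : r ∈ s) (hρr : ρ ≤ r) :
    PhiInv (v ρ) + ∫ x in ρ..r, c x ≤ PhiInv (v r) ∧
      Phi (PhiInv (v ρ) + ∫ x in ρ..r, c x) ≤ v r := by
  have hsub : Icc ρ r ⊆ s := s.Icc_subset hρ hr
  have hrange : Icc (v ρ) (v r) ⊆ Ioo 0 1 := ordConnected_Ioo.out (hv01 hρ) (hv01 hr)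
  have hint : IntervalIntegrable c volume ρ r :=
    (intervalIntegrable_iff_integrableOn_Icc_of_le hρr).2
      (hc.integrableOn_compact_subset hsub isCompact_Icc)
  have hcomp : ∀ᵐ x ∂volume.restrict (Icc ρ r), c x ≤ (gaussI (v x))⁻¹ * deriv v x := by
    filter_upwards [ae_restrict_of_ae_restrict_of_subset hsub hderiv] with x hx
    rwa [inv_mul_eq_div, le_div_iff₀ (gaussI_pos _)]
  have hincr : ∫ x in ρ..r, c x ≤ PhiInv (v r) - PhiInv (v ρ) :=
    integral_le_comp_sub_comp_of_monotoneOn hρr (hmono.mono hsub)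
      (fun y hy => hasDerivAt_PhiInv (hrange hy)) (fun y _ => (inv_pos.2 (gaussI_pos y)).le)
      hint hcomp
  rw [← le_PhiInv_iff (hv01 hr), and_self]
  exact le_sub_iff_add_le'.1 hincr

/-- If `v : [0,∞) → (0,1)` is nondecreasing and for a.e. `r > 0` it is differentiable at `r`
with `v'(r) ≥ c·I(v(r))`, then `Φ⁻¹(v(r)) ≥ Φ⁻¹(v(ρ)) + c(r-ρ)`, i.e.
`v(r) ≥ Φ(Φ⁻¹(v(ρ)) + c(r-ρ))`, for all `0 ≤ ρ ≤ r`. -/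
theorem stmt10 (c : ℝ) (hc : 0 < c) (v : ℝ → ℝ)
    (hv01 : ∀ r, 0 ≤ r → v r ∈ Set.Ioo (0 : ℝ) 1)
    (hmono : MonotoneOn v (Set.Ici (0 : ℝ)))
    (hderiv : ∀ᵐ r ∂(volume.restrict (Set.Ioi (0 : ℝ))),
      DifferentiableAt ℝ v r ∧ c * gaussI (v r) ≤ deriv v r) :
    ∀ ρ r : ℝ, 0 ≤ ρ → ρ ≤ r →
      PhiInv (v ρ) + c * (r - ρ) ≤ PhiInv (v r) ∧
      Phi (PhiInv (v ρ) + c * (r - ρ)) ≤ v r := by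
  intro ρ r hρ hρr
  rw [restrict_Ioi_eq_restrict_Ici] at hderiv
  simpa [mul_comm c] using stmt10_general (s := Ici 0) (locallyIntegrableOn_const c) hv01 hmono
    (hderiv.mono fun _ hx => hx.2) hρ (hρ.trans hρr) hρr
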